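/- Let a, b be non-zero rational integers and c_α, c_β non-zero rational integers, and let α, β be roots of unity with ord(α) ≤ ord(β). If 0 = a + b·i + c_α·α + c_β·β, then α = ±1, β = ±i, and moreover a + α·c_α = 0 and b·i + β·c_β = 0. -/

import Mathlib

/-!
Put `z = a + b i`. Taking absolute values in `-c_β β = z + c_α α` shows that `α` is a root of
`X² + (r / z̄) X + z / z̄`, where `r = (|z|² + c_α² - c_β²) / c_α`. An algebraic integer that is
quadratic over `ℚ(i)` has its minimal polynomial in `ℤ[i][X]`, so, unless `α` already lies in
`ℤ[i]`, the constant term `u = z / z̄` is a unit of `ℤ[i]`. Since `a b ≠ 0`, it is `±i`. The linear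
coefficient `s` is a Gaussian integer with `s = u s̄` and `|s| ≤ 2`, that is, `s ∈ {0, ±(1 + u)}`.
As `X² ± (1 + u) X + u = (X ± 1) (X ± u)`, only `s = 0` is left, which gives `|z|² + c_α² = c_β²`.
By symmetry `|z|² + c_β² = c_α²` unless `β ∈ ℤ[i]`, and the two are incompatible. So one of `α`, `β`
lies in `ℤ[i]`, hence both do, and both are powers of `i`.
-/

open Complex ComplexConjugate Polynomial

section IntegrallyClosed

variable {R K L : Type*} [CommRing R] [IsIntegrallyClosed R]
  [Field K] [Algebra R K] [IsFractionRing R K] [Field L] [Algebra R L] [Algebra K L]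
  [IsScalarTower R K L] {x : L}

theorem mem_range_algebraMap_of_isIntegral (hx : IsIntegral R x)
    (h : x ∈ (algebraMap K L).range) : x ∈ (algebraMap R L).range := by
  obtain ⟨y, rfl⟩ := h
  have hy : IsIntegral R y := (isIntegral_algebraMap_iff (algebraMap K L).injective).1 hx
  obtain ⟨w, rfl⟩ := IsIntegrallyClosed.isIntegral_iff.1 hy
  exact ⟨w, IsScalarTower.algebraMap_apply R K L w⟩

theorem mem_range_algebraMap_or_of_isIntegral_of_quadratic [IsDomain R] (hx : IsIntegral R x)
    {p q : K} (h : x ^ 2 + algebraMap K L p * x + algebraMap K L q = 0) :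
    x ∈ (algebraMap R L).range ∨ (p ∈ (algebraMap R K).range ∧ q ∈ (algebraMap R K).range) := by
  by_cases hxK : x ∈ (algebraMap K L).range
  · exact .inl (mem_range_algebraMap_of_isIntegral hx hxK)
  right
  set f : K[X] := C 1 * X ^ 2 + C p * X + C q with hf
  have hdeg : f.natDegree = 2 := natDegree_quadratic one_ne_zero
  have hmonic : f.Monic := leadingCoeff_quadratic one_ne_zero
  have hdvd : minpoly K x ∣ f := minpoly.dvd K x (by simpa [hf] using h)
  have htwo : 2 ≤ (minpoly K x).natDegree :=
    (minpoly.two_le_natDegree_iff hx.tower_top).2 hxK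
  have hmin : f = minpoly K x :=
    eq_of_monic_of_dvd_of_natDegree_le (minpoly.monic hx.tower_top) hmonic hdvd (hdeg.trans_le htwo)
  rw [minpoly.isIntegrallyClosed_eq_field_fractions' K hx] at hmin
  constructor
  · exact ⟨_, by simpa [hf] using congrArg (coeff · 1) hmin.symm⟩
  · exact ⟨_, by simpa [hf] using congrArg (coeff · 0) hmin.symm⟩

end IntegrallyClosed

section GaussianRationals

noncomputable local instance : Algebra GaussianInt ℂ := GaussianInt.toComplex.toAlgebra

local instance : FaithfulSMul GaussianInt ℂ :=
  (faithfulSMul_iff_algebraMap_injective _ _).2 GaussianInt.toComplex_injective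

attribute [local instance] FractionRing.liftAlgebra

/-- The field `ℚ(i)`, as the image in `ℂ` of the field of fractions of `ℤ[i]`. In this file `ℤ[i]`
itself, as a subring of `ℂ`, is `GaussianInt.toComplex.range`. -/
noncomputable def gaussianRationals : Subfield ℂ :=
  (algebraMap (FractionRing GaussianInt) ℂ).fieldRange

theorem toComplex_mem_gaussianRationals (g : GaussianInt) : (g : ℂ) ∈ gaussianRationals :=
  ⟨algebraMap _ _ g, (IsScalarTower.algebraMap_apply GaussianInt _ ℂ g).symm⟩

theorem I_mem_gaussianRationals : I ∈ gaussianRationals := by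
  simpa [GaussianInt.toComplex_def'] using toComplex_mem_gaussianRationals ⟨0, 1⟩

theorem conj_mem_gaussianRationals {z : ℂ} (hz : z ∈ gaussianRationals) :
    conj z ∈ gaussianRationals := by
  obtain ⟨w, rfl⟩ := hz
  obtain ⟨g, k, -, rfl⟩ := IsFractionRing.div_surjective GaussianInt w
  rw [map_div₀, map_div₀, ← IsScalarTower.algebraMap_apply, ← IsScalarTower.algebraMap_apply]
  simp only [RingHom.algebraMap_toAlgebra, ← GaussianInt.toComplex_star]
  exact div_mem (toComplex_mem_gaussianRationals _) (toComplex_mem_gaussianRationals _)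

theorem normSq_mem_gaussianRationals {z : ℂ} (hz : z ∈ gaussianRationals) :
    (normSq z : ℂ) ∈ gaussianRationals :=
  mul_conj z ▸ mul_mem hz (conj_mem_gaussianRationals hz)

variable {x : ℂ}

theorem mem_range_toComplex_of_isIntegral (hx : IsIntegral ℤ x) (h : x ∈ gaussianRationals) :
    x ∈ GaussianInt.toComplex.range :=
  mem_range_algebraMap_of_isIntegral hx.tower_top h

theorem mem_range_toComplex_or_of_isIntegral_of_quadratic (hx : IsIntegral ℤ x) {p q : ℂ}
    (hp : p ∈ gaussianRationals) (hq : q ∈ gaussianRationals) (h : x ^ 2 + p * x + q = 0) :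
    x ∈ GaussianInt.toComplex.range ∨
      (p ∈ GaussianInt.toComplex.range ∧ q ∈ GaussianInt.toComplex.range) := by
  obtain ⟨p, rfl⟩ := hp
  obtain ⟨q, rfl⟩ := hq
  refine (mem_range_algebraMap_or_of_isIntegral_of_quadratic hx.tower_top h).imp_right ?_
  rintro ⟨⟨s, rfl⟩, ⟨u, rfl⟩⟩
  exact ⟨⟨s, IsScalarTower.algebraMap_apply GaussianInt _ ℂ s⟩,
    ⟨u, IsScalarTower.algebraMap_apply GaussianInt _ ℂ u⟩⟩

end GaussianRationals

theorem sq_eq_neg_one_iff_eq_I_or_neg_I {z : ℂ} : z ^ 2 = -1 ↔ z = I ∨ z = -I := by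
  rw [← I_sq, sq_eq_sq_iff_eq_or_eq_neg]

theorem sq_eq_one_or_neg_one_of_mem_range_toComplex {u : ℂ}
    (hu : u ∈ GaussianInt.toComplex.range) (hu₁ : ‖u‖ = 1) : u ^ 2 = 1 ∨ u ^ 2 = -1 := by
  obtain ⟨g, rfl⟩ := hu
  have hnorm : g.re ^ 2 + g.im ^ 2 = 1 := by
    have : ((g.re ^ 2 + g.im ^ 2 : ℤ) : ℝ) = (1 : ℤ) := by
      simp [sq, ← normSq_apply, normSq_eq_norm_sq, hu₁]
    exact_mod_cast this
  have haxis : g.re = 0 ∨ g.im = 0 := by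
    by_contra! h
    have hre : 0 < g.re ^ 2 := sq_pos_of_ne_zero h.1
    have him : 0 < g.im ^ 2 := sq_pos_of_ne_zero h.2
    linarith
  rw [GaussianInt.toComplex_def]
  rcases haxis with h | h
  · have him : (g.im : ℂ) ^ 2 = 1 := by exact_mod_cast (by simpa [h] using hnorm)
    right
    simp [h, mul_pow, him]
  · have hre : (g.re : ℂ) ^ 2 = 1 := by exact_mod_cast (by simpa [h] using hnorm)
    left
    simp [h, hre]

theorem div_conj_sq_ne_one {z : ℂ} (hre : z.re ≠ 0) (him : z.im ≠ 0) : (z / conj z) ^ 2 ≠ 1 := by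
  intro h
  have hz : conj z ≠ 0 := by
    simpa using ne_of_apply_ne re hre
  rw [div_pow, div_eq_one_iff_eq (pow_ne_zero 2 hz)] at h
  have him_sq : 2 * z.re * z.im = 0 := by
    have := congrArg im h
    simp only [sq, mul_im, conj_re, conj_im] at this
    linarith
  simp [hre, him] at him_sq

theorem norm_le_two_of_quadratic {𝕜 : Type*} [NormedField 𝕜] {x s u : 𝕜} (hx : ‖x‖ = 1)
    (hu : ‖u‖ = 1) (h : x ^ 2 + s * x + u = 0) : ‖s‖ ≤ 2 :=
  calc
    ‖s‖ = ‖s * x‖ := by rw [norm_mul, hx, mul_one]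
    _ = ‖x ^ 2 + u‖ := by rw [← norm_neg]; congr 1; linear_combination -h
    _ ≤ ‖x ^ 2‖ + ‖u‖ := norm_add_le _ _
    _ = 2 := by rw [norm_pow, hx, hu]; norm_num

theorem eq_re_mul_one_add_of_eq_mul_conj {s u : ℂ} (hu : u ^ 2 = -1) (hs : s = u * conj s) :
    s = s.re * (1 + u) := by
  rw [re_eq_add_conj]
  linear_combination (1 / 2 - u / 2) * hs - conj s / 2 * hu

theorem norm_one_add_sq_of_sq_eq_neg_one {u : ℂ} (hu : u ^ 2 = -1) : ‖1 + u‖ ^ 2 = 2 := by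
  rcases sq_eq_neg_one_iff_eq_I_or_neg_I.1 hu with rfl | rfl <;>
    norm_num [← normSq_eq_norm_sq, normSq_apply]

theorem eq_zero_or_eq_one_add_of_eq_mul_conj {s u : ℂ} (hs : s ∈ GaussianInt.toComplex.range)
    (hu : u ^ 2 = -1) (hsu : s = u * conj s) (hs₂ : ‖s‖ ≤ 2) :
    s = 0 ∨ s = 1 + u ∨ s = -(1 + u) := by
  obtain ⟨g, hg⟩ := hs
  have hs_eq : s = g.re * (1 + u) := by
    have := eq_re_mul_one_add_of_eq_mul_conj hu hsu
    rwa [← hg, ← GaussianInt.intCast_re, hg, ofReal_intCast] at this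
  have hre_sq : (g.re : ℝ) ^ 2 * 2 ≤ 2 ^ 2 :=
    calc
      (g.re : ℝ) ^ 2 * 2 = ‖s‖ ^ 2 := by
        rw [hs_eq, norm_mul, mul_pow, norm_one_add_sq_of_sq_eq_neg_one hu, norm_intCast, sq_abs]
      _ ≤ 2 ^ 2 := by gcongr
  have hre : |g.re| ≤ 1 := by
    have : g.re ^ 2 * 2 ≤ 2 ^ 2 := by exact_mod_cast hre_sq
    rw [abs_le]
    constructor <;> nlinarith
  rcases Int.abs_le_one_iff.1 hre with h | h | h <;> simp [hs_eq, h]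

theorem mem_of_sq_add_one_add_mul_add_eq_zero {A : Type*} [CommRing A] [NoZeroDivisors A]
    {S : Subring A} {x u : A} (hu : u ∈ S) (h : x ^ 2 + (1 + u) * x + u = 0) : x ∈ S := by
  have hfactor : (x + 1) * (x + u) = 0 := by linear_combination h
  rcases mul_eq_zero.1 hfactor with hx | hx
  · exact eq_neg_of_add_eq_zero_left hx ▸ neg_mem (one_mem S)
  · exact eq_neg_of_add_eq_zero_left hx ▸ neg_mem hu

theorem mem_range_toComplex_or_eq_zero_of_quadratic {x z : ℂ} {r : ℝ} (hx : IsIntegral ℤ x)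
    (hx₁ : ‖x‖ = 1) (hz : z ∈ gaussianRationals) (hre : z.re ≠ 0) (him : z.im ≠ 0)
    (hr : (r : ℂ) ∈ gaussianRationals) (h : x ^ 2 + r / conj z * x + z / conj z = 0) :
    x ∈ GaussianInt.toComplex.range ∨ r = 0 := by
  have hz' := conj_mem_gaussianRationals hz
  have hz₀ : z ≠ 0 := ne_of_apply_ne re hre
  have hz₀' : conj z ≠ 0 := by simpa using hz₀
  rcases mem_range_toComplex_or_of_isIntegral_of_quadratic hx (div_mem hr hz') (div_mem hz hz') h
    with hmem | ⟨hs, hu⟩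
  · exact .inl hmem
  have hu₁ : ‖z / conj z‖ = 1 := by simp [hz₀]
  have hu₂ : (z / conj z) ^ 2 = -1 :=
    (sq_eq_one_or_neg_one_of_mem_range_toComplex hu hu₁).resolve_left (div_conj_sq_ne_one hre him)
  have hsu : r / conj z = z / conj z * conj (r / conj z) := by
    rw [map_div₀, conj_ofReal, conj_conj]
    field_simp
  have hs₂ : ‖r / conj z‖ ≤ 2 := norm_le_two_of_quadratic hx₁ hu₁ h
  rcases eq_zero_or_eq_one_add_of_eq_mul_conj hs hu₂ hsu hs₂ with hs | hs | hs
  · right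
    simpa [hz₀] using hs
  · exact .inl (mem_of_sq_add_one_add_mul_add_eq_zero hu (hs ▸ h))
  · rw [hs] at h
    have hneg : -x ∈ GaussianInt.toComplex.range :=
      mem_of_sq_add_one_add_mul_add_eq_zero hu (by linear_combination h)
    exact .inl (neg_mem_iff.1 hneg)

section VanishingSum

variable {z α β : ℂ} {c d : ℝ}

theorem quadratic_of_vanishing_sum (hα : ‖α‖ = 1) (hβ : ‖β‖ = 1) (hc : c ≠ 0) (hz : z ≠ 0)
    (h : z + c * α + d * β = 0) :
    α ^ 2 + ((normSq z + c ^ 2 - d ^ 2) / c : ℝ) / conj z * α + z / conj z = 0 := by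
  have hαα : α * conj α = 1 := by simp [mul_conj', hα]
  have hββ : β * conj β = 1 := by simp [mul_conj', hβ]
  have h' : conj z + c * conj α + d * conj β = 0 := by simpa using congrArg conj h
  have hnorm : (d : ℂ) ^ 2 = (z + c * α) * (conj z + c * conj α) := by
    linear_combination (-d ^ 2 : ℂ) * hββ + d * conj β * h - (z + c * α) * h'
  have hc' : (c : ℂ) ≠ 0 := ofReal_ne_zero.2 hc
  have hz' : conj z ≠ 0 := by simpa using hz
  push_cast
  rw [← mul_conj]
  field_simp
  linear_combination -α * hnorm + (-c * z - c ^ 2 * α) * hαα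

theorem mem_range_toComplex_or_normSq_add_eq {c d : ℚ} (hα : IsIntegral ℤ α) (hα₁ : ‖α‖ = 1)
    (hβ₁ : ‖β‖ = 1) (hz : z ∈ gaussianRationals) (hre : z.re ≠ 0) (him : z.im ≠ 0) (hc : c ≠ 0)
    (h : z + c * α + d * β = 0) :
    α ∈ GaussianInt.toComplex.range ∨ normSq z + c ^ 2 = d ^ 2 := by
  have hr : (((normSq z + c ^ 2 - d ^ 2) / c : ℝ) : ℂ) ∈ gaussianRationals := by
    have hcd : ((c ^ 2 - d ^ 2 : ℚ) : ℂ) ∈ gaussianRationals := SubfieldClass.ratCast_mem _ _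
    have := div_mem (add_mem (normSq_mem_gaussianRationals hz) hcd)
      (SubfieldClass.ratCast_mem gaussianRationals c)
    push_cast at this ⊢
    rwa [add_sub_assoc]
  have hc' : (c : ℝ) ≠ 0 := Rat.cast_ne_zero.2 hc
  have hquad := quadratic_of_vanishing_sum (c := c) (d := d) hα₁ hβ₁ hc' (ne_of_apply_ne re hre)
    (by simpa using h)
  refine (mem_range_toComplex_or_eq_zero_of_quadratic hα hα₁ hz hre him hr hquad).imp_right ?_
  intro hr₀
  exact sub_eq_zero.1 ((div_eq_zero_iff.1 hr₀).resolve_right hc')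

theorem mem_range_toComplex_of_linear_relation {c d : ℂ} (hβ : IsIntegral ℤ β)
    (hz : z ∈ gaussianRationals) (hc : c ∈ gaussianRationals) (hd : d ∈ gaussianRationals)
    (hd₀ : d ≠ 0) (h : z + c * α + d * β = 0) (hα : α ∈ GaussianInt.toComplex.range) :
    β ∈ GaussianInt.toComplex.range := by
  obtain ⟨g, rfl⟩ := hα
  have hβ_eq : β = -(z + c * g) / d := by
    rw [eq_div_iff hd₀]
    linear_combination h
  refine mem_range_toComplex_of_isIntegral hβ (hβ_eq ▸ ?_)
  exact div_mem (neg_mem (add_mem hz (mul_mem hc (toComplex_mem_gaussianRationals g)))) hd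

theorem mem_range_toComplex_and_of_vanishing_sum {c d : ℚ} (hα : IsIntegral ℤ α) (hα₁ : ‖α‖ = 1)
    (hβ : IsIntegral ℤ β) (hβ₁ : ‖β‖ = 1) (hz : z ∈ gaussianRationals) (hre : z.re ≠ 0)
    (him : z.im ≠ 0) (hc : c ≠ 0) (hd : d ≠ 0) (h : z + c * α + d * β = 0) :
    α ∈ GaussianInt.toComplex.range ∧ β ∈ GaussianInt.toComplex.range := by
  have hcF : (c : ℂ) ∈ gaussianRationals := SubfieldClass.ratCast_mem _ c
  have hdF : (d : ℂ) ∈ gaussianRationals := SubfieldClass.ratCast_mem _ d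
  have hc' : (c : ℂ) ≠ 0 := Rat.cast_ne_zero.2 hc
  have hd' : (d : ℂ) ≠ 0 := Rat.cast_ne_zero.2 hd
  have h' : z + d * β + c * α = 0 := by rw [add_right_comm, h]
  rcases mem_range_toComplex_or_normSq_add_eq hα hα₁ hβ₁ hz hre him hc h with hmem | hcd
  · exact ⟨hmem, mem_range_toComplex_of_linear_relation hβ hz hcF hdF hd' h hmem⟩
  rcases mem_range_toComplex_or_normSq_add_eq hβ hβ₁ hα₁ hz hre him hd h' with hmem | hdc
  · exact ⟨mem_range_toComplex_of_linear_relation hα hz hdF hcF hc' h' hmem, hmem⟩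
  · have hpos : 0 < normSq z := normSq_pos.2 (ne_of_apply_ne re hre)
    linarith

theorem im_eq_zero_of_sq_eq_one {w : ℂ} (hw : w ^ 2 = 1) : w.im = 0 := by
  rcases sq_eq_one_iff.1 hw with rfl | rfl <;> simp

theorem re_eq_zero_of_sq_eq_neg_one {w : ℂ} (hw : w ^ 2 = -1) : w.re = 0 := by
  rcases sq_eq_neg_one_iff_eq_I_or_neg_I.1 hw with rfl | rfl <;> simp

theorem orderOf_eq_four_of_sq_eq_neg_one {M : Type*} [Monoid M] [HasDistribNeg M]
    (hM : (-1 : M) ≠ 1) {w : M} (hw : w ^ 2 = -1) : orderOf w = 4 :=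
  orderOf_eq_prime_pow (p := 2) (n := 1) (by rwa [pow_one, hw])
    (by rw [pow_succ, pow_one, pow_mul, hw, neg_one_sq])

theorem sq_eq_one_and_sq_eq_neg_one_of_vanishing_sum (hre : z.re ≠ 0) (him : z.im ≠ 0)
    (hα : α ^ 2 = 1 ∨ α ^ 2 = -1) (hβ : β ^ 2 = 1 ∨ β ^ 2 = -1) (hord : orderOf α ≤ orderOf β)
    (h : z + c * α + d * β = 0) : α ^ 2 = 1 ∧ β ^ 2 = -1 := by
  rcases hα with hα | hα <;> rcases hβ with hβ | hβ
  · have := congrArg im h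
    simp [im_eq_zero_of_sq_eq_one, hα, hβ, him] at this
  · exact ⟨hα, hβ⟩
  · have : orderOf β ≤ 2 := orderOf_le_of_pow_eq_one two_pos hβ
    have : orderOf α = 4 := orderOf_eq_four_of_sq_eq_neg_one (by norm_num) hα
    lia
  · have := congrArg re h
    simp [re_eq_zero_of_sq_eq_neg_one, hα, hβ, hre] at this

theorem re_add_mul_eq_zero_and_im_mul_I_add_mul_eq_zero (hα : α.im = 0) (hβ : β.re = 0)
    (h : z + c * α + d * β = 0) : z.re + α * c = 0 ∧ z.im * I + β * d = 0 := by
  have hre := congrArg re h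
  have him := congrArg im h
  constructor
  · exact Complex.ext (by simpa [hβ, mul_comm] using hre) (by simp [hα])
  · exact Complex.ext (by simp [hβ]) (by simpa [hα, mul_comm] using him)

end VanishingSum

theorem vanishing_sum_general {a b c d : ℚ} (ha : a ≠ 0) (hb : b ≠ 0) (hc : c ≠ 0) (hd : d ≠ 0)
    {α β : ℂ} (hα : IsIntegral ℤ α) (hα₁ : ‖α‖ = 1) (hβ : IsIntegral ℤ β) (hβ₁ : ‖β‖ = 1)
    (hord : orderOf α ≤ orderOf β) (h : 0 = (a : ℂ) + b * I + c * α + d * β) :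
    (α = 1 ∨ α = -1) ∧ (β = I ∨ β = -I) ∧ a + α * c = 0 ∧ b * I + β * d = 0 := by
  have hz : (a + b * I : ℂ) ∈ gaussianRationals := add_mem (SubfieldClass.ratCast_mem _ a)
    (mul_mem (SubfieldClass.ratCast_mem _ b) I_mem_gaussianRationals)
  have hre : (a + b * I : ℂ).re ≠ 0 := by simpa using ha
  have him : (a + b * I : ℂ).im ≠ 0 := by simpa using hb
  obtain ⟨hα_mem, hβ_mem⟩ :=
    mem_range_toComplex_and_of_vanishing_sum hα hα₁ hβ hβ₁ hz hre him hc hd h.symm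
  have h' : (a + b * I : ℂ) + (c : ℝ) * α + (d : ℝ) * β = 0 := by simpa using h.symm
  obtain ⟨hα₂, hβ₂⟩ := sq_eq_one_and_sq_eq_neg_one_of_vanishing_sum hre him
    (sq_eq_one_or_neg_one_of_mem_range_toComplex hα_mem hα₁)
    (sq_eq_one_or_neg_one_of_mem_range_toComplex hβ_mem hβ₁) hord h'
  refine ⟨sq_eq_one_iff.1 hα₂, sq_eq_neg_one_iff_eq_I_or_neg_I.1 hβ₂, ?_⟩
  simpa using re_add_mul_eq_zero_and_im_mul_I_add_mul_eq_zero (im_eq_zero_of_sq_eq_one hα₂)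
    (re_eq_zero_of_sq_eq_neg_one hβ₂) h'

/-- Lemma 4.4 (vanishing sum): if `0 = a + b·i + c_α·α + c_β·β` with `a, b, c_α, c_β`
nonzero integers and `α, β` roots of unity with `ord(α) ≤ ord(β)`, then `α = ±1`,
`β = ±i`, `a + α·c_α = 0` and `b·i + β·c_β = 0`. -/
theorem vanishing_sum (a b cα cβ : ℤ) (ha : a ≠ 0) (hb : b ≠ 0) (hcα : cα ≠ 0) (hcβ : cβ ≠ 0)
    (α β : ℂ) (hα : ∃ n : ℕ, 0 < n ∧ α ^ n = 1) (hβ : ∃ n : ℕ, 0 < n ∧ β ^ n = 1)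
    (hord : orderOf α ≤ orderOf β)
    (heq : 0 = (a : ℂ) + (b : ℂ) * Complex.I + (cα : ℂ) * α + (cβ : ℂ) * β) :
    (α = 1 ∨ α = -1) ∧ (β = Complex.I ∨ β = -Complex.I) ∧
      (a : ℂ) + α * (cα : ℂ) = 0 ∧ (b : ℂ) * Complex.I + β * (cβ : ℂ) = 0 := by
  obtain ⟨m, hm, hαm⟩ := hα
  obtain ⟨n, hn, hβn⟩ := hβ
  have := vanishing_sum_general (a := a) (b := b) (c := cα) (d := cβ) (mod_cast ha) (mod_cast hb)
    (mod_cast hcα) (mod_cast hcβ) (.of_pow hm (hαm ▸ isIntegral_one))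
    (norm_eq_one_of_pow_eq_one hαm hm.ne') (.of_pow hn (hβn ▸ isIntegral_one))
    (norm_eq_one_of_pow_eq_one hβn hn.ne') hord (mod_cast heq)
  exact_mod_cast this
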